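/- arXiv:1906.09646 — 7 statements merged into one kernel-verified Lean document; each statement's English description precedes it below -/
import Mathlib

section
/- Let q > 3 be a prime power and F_q the finite field with q elements. Then the only proper normal subgroups of the special linear group SL₂(F_q) are the trivial subgroup {I} and the subgroup {I, -I}. -/
lemma field_cond_aux (F : Type) [Field F] [Fintype F] (hq : 3 < Fintype.card F) :
    ∃ a : F, a ≠ 0 ∧ a ^ 2 ≠ 1 := by
  classical
  by_contra! h
  have hsub : (Finset.univ : Finset F) ⊆ {0, 1, -1} := by
    intro a _
    by_cases ha : a = 0
    · simp [ha]
    · rcases sq_eq_one_iff.mp (h a ha) with h1 | h1 <;> simp [h1]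
  have h1 := Finset.card_le_card hsub
  have h2 : ({0, 1, -1} : Finset F).card ≤ 3 := Finset.card_le_three
  rw [Finset.card_univ] at h1
  omega

lemma center_aux (F : Type) [Field F] (A : Matrix.SpecialLinearGroup (Fin 2) F)
    (hA : A ∈ Subgroup.center (Matrix.SpecialLinearGroup (Fin 2) F)) :
    (A : Matrix (Fin 2) (Fin 2) F) = 1 ∨ (A : Matrix (Fin 2) (Fin 2) F) = -1 := by
  obtain ⟨r, hr, hA⟩ := Matrix.SpecialLinearGroup.mem_center_iff.mp hA
  rw [Fintype.card_fin] at hr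
  rcases sq_eq_one_iff.mp hr with h | h
  · left; rw [← hA, h, map_one]
  · right; rw [← hA, h, map_neg, map_one]

/-- The only proper normal subgroups of `SL₂(F_q)` for a finite field `F_q` with
`q > 3` elements are the trivial subgroup `{I}` and the subgroup `{I, -I}`. -/
theorem stmt0 (F : Type) [Field F] [Fintype F] (hq : 3 < Fintype.card F)
    (H : Subgroup (Matrix.SpecialLinearGroup (Fin 2) F)) (hnormal : H.Normal)
    (hproper : H ≠ ⊤) :
    H = ⊥ ∨ ∀ A : Matrix.SpecialLinearGroup (Fin 2) F,
      A ∈ H ↔ ((A : Matrix (Fin 2) (Fin 2) F) = 1 ∨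
        (A : Matrix (Fin 2) (Fin 2) F) = -1) := by
  have hF := field_cond_aux F hq
  have hs := Matrix.ProjectiveSpecialLinearGroup.rank_two_simple' hF
  obtain ⟨a, ha, hasq⟩ := hF
  have hperf := Matrix.SL2.commutator_eq_top ha hasq
  have hn : (H.map (QuotientGroup.mk'
      (Subgroup.center (Matrix.SpecialLinearGroup (Fin 2) F)))).Normal :=
    hnormal.map _ (QuotientGroup.mk'_surjective _)
  rcases hs.eq_bot_or_eq_top_of_normal _ hn with hb | ht
  · rw [Subgroup.map_eq_bot_iff, QuotientGroup.ker_mk'] at hb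
    by_cases hH : H = ⊥
    · exact Or.inl hH
    right
    obtain ⟨B, hB, hB1⟩ := H.bot_or_exists_ne_one.resolve_left hH
    intro A
    refine ⟨fun hA => center_aux F A (hb hA), ?_⟩
    rintro (h | h)
    · have : A = 1 := Subtype.ext h
      rw [this]; exact H.one_mem
    · rcases center_aux F B (hb hB) with h' | h'
      · exact absurd (Subtype.ext h') hB1
      · have : A = B := Subtype.ext (h.trans h'.symm)
        rw [this]; exact hB
  · exfalso
    apply hproper
    rw [eq_top_iff, ← hperf, commutator_def, Subgroup.commutator_le]
    have key : ∀ g : Matrix.SpecialLinearGroup (Fin 2) F, ∃ h ∈ H,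
        ∃ z ∈ Subgroup.center (Matrix.SpecialLinearGroup (Fin 2) F), g = h * z := by
      intro g
      have hg : (QuotientGroup.mk' (Subgroup.center _)) g ∈ H.map (QuotientGroup.mk'
          (Subgroup.center (Matrix.SpecialLinearGroup (Fin 2) F))) := by
        rw [ht]; trivial
      obtain ⟨h, hh, e⟩ := hg
      refine ⟨h, hh, h⁻¹ * g, ?_, by group⟩
      exact QuotientGroup.eq.mp e
    intro g _ k _
    obtain ⟨h, hh, z, hz, rfl⟩ := key g
    rw [← QuotientGroup.eq_one_iff, ← QuotientGroup.mk'_apply, map_commutatorElement,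
      commutatorElement_eq_one_iff_mul_comm, ← map_mul, ← map_mul]
    have e : (QuotientGroup.mk' H) h = 1 := (QuotientGroup.eq_one_iff h).mpr hh
    rw [map_mul, map_mul, map_mul, map_mul, e, one_mul, ← map_mul, ← map_mul,
      Subgroup.mem_center_iff.mp hz k]
end

section
/- Let ℓ be an odd prime. Then every proper normal subgroup H of SL₂(ℤ/ℓℤ) has index [SL₂(ℤ/ℓℤ) : H] divisible by ℓ. -/
/-- Every element with `ℓ`-th power one lies in a normal subgroup of index prime to `ℓ`. -/
theorem mem_of_pow_eq_one_aux {G : Type*} [Group G] (ℓ : ℕ) (hℓ : ℓ.Prime)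
    (H : Subgroup G) [H.Normal] (hd : ¬ ℓ ∣ H.index) (g : G) (hg : g ^ ℓ = 1) : g ∈ H := by
  rw [← QuotientGroup.eq_one_iff]
  have h1 : (g : G ⧸ H) ^ ℓ = 1 := by
    rw [← QuotientGroup.mk_pow, hg, QuotientGroup.mk_one]
  have h2 : (g : G ⧸ H) ^ H.index = 1 := by
    rw [Subgroup.index]; exact pow_card_eq_one'
  have h3 := Nat.dvd_gcd (orderOf_dvd_of_pow_eq_one h1) (orderOf_dvd_of_pow_eq_one h2)
  rw [(Nat.Prime.coprime_iff_not_dvd hℓ).2 hd] at h3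
  exact orderOf_eq_one_iff.1 (Nat.dvd_one.1 h3)

/-- Upper unipotent matrix. -/
def upperU {R : Type*} [CommRing R] (x : R) : Matrix.SpecialLinearGroup (Fin 2) R :=
  ⟨!![1, x; 0, 1], by simp [Matrix.det_fin_two]⟩

/-- Lower unipotent matrix. -/
def lowerU {R : Type*} [CommRing R] (x : R) : Matrix.SpecialLinearGroup (Fin 2) R :=
  ⟨!![1, 0; x, 1], by simp [Matrix.det_fin_two]⟩

theorem upperU_coe {R : Type*} [CommRing R] (x : R) :
    (upperU x : Matrix (Fin 2) (Fin 2) R) = !![1, x; 0, 1] := rfl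

theorem lowerU_coe {R : Type*} [CommRing R] (x : R) :
    (lowerU x : Matrix (Fin 2) (Fin 2) R) = !![1, 0; x, 1] := rfl

theorem upperU_pow {R : Type*} [CommRing R] (x : R) (n : ℕ) :
    upperU x ^ n = upperU (n * x) := by
  induction n with
  | zero => ext i j; fin_cases i <;> fin_cases j <;> simp [upperU_coe]
  | succ n ih =>
    rw [pow_succ, ih]
    ext i j; fin_cases i <;> fin_cases j <;>
      simp [upperU_coe, Matrix.mul_apply, Fin.sum_univ_two] <;> try ring

theorem lowerU_pow {R : Type*} [CommRing R] (x : R) (n : ℕ) :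
    lowerU x ^ n = lowerU (n * x) := by
  induction n with
  | zero => ext i j; fin_cases i <;> fin_cases j <;> simp [lowerU_coe]
  | succ n ih =>
    rw [pow_succ, ih]
    ext i j; fin_cases i <;> fin_cases j <;>
      simp [lowerU_coe, Matrix.mul_apply, Fin.sum_univ_two] <;> try ring

theorem eq_prod_aux {K : Type*} [Field K] (g : Matrix.SpecialLinearGroup (Fin 2) K)
    (hc : g.1 1 0 ≠ 0) :
    g = upperU ((g.1 0 0 - 1) / g.1 1 0) * lowerU (g.1 1 0) *
      upperU ((g.1 1 1 - 1) / g.1 1 0) := by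
  have hdet := g.2
  rw [Matrix.det_fin_two] at hdet
  ext i j
  fin_cases i <;> fin_cases j <;>
    simp [upperU_coe, lowerU_coe, Matrix.mul_apply, Fin.sum_univ_two] <;> field_simp <;>
    first | ring1 | linear_combination -hdet

/-- Every proper normal subgroup of `SL₂(ℤ/ℓℤ)`, for `ℓ` an odd prime,
has index divisible by `ℓ`. -/
theorem stmt1 (ℓ : ℕ) (hℓ : ℓ.Prime) (hodd : Odd ℓ)
    (H : Subgroup (Matrix.SpecialLinearGroup (Fin 2) (ZMod ℓ))) (hnormal : H.Normal)
    (hproper : H ≠ ⊤) :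
    ℓ ∣ H.index := by
  have : Fact ℓ.Prime := ⟨hℓ⟩
  by_contra hd
  apply hproper
  have hU : ∀ x, upperU x ∈ H := fun x => mem_of_pow_eq_one_aux ℓ hℓ H hd _ (by
    rw [upperU_pow]
    ext i j; fin_cases i <;> fin_cases j <;> simp [upperU_coe])
  have hL : ∀ x, lowerU x ∈ H := fun x => mem_of_pow_eq_one_aux ℓ hℓ H hd _ (by
    rw [lowerU_pow]
    ext i j; fin_cases i <;> fin_cases j <;> simp [lowerU_coe])
  have key : ∀ g : Matrix.SpecialLinearGroup (Fin 2) (ZMod ℓ), g.1 1 0 ≠ 0 → g ∈ H := by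
    intro g hg
    rw [eq_prod_aux g hg]
    exact H.mul_mem (H.mul_mem (hU _) (hL _)) (hU _)
  rw [eq_top_iff]
  intro g _
  by_cases hc : g.1 1 0 = 0
  · rw [← H.mul_mem_cancel_left (hL 1)]
    apply key
    have hdet := g.2
    rw [Matrix.det_fin_two, hc] at hdet
    intro h
    simp [lowerU_coe, Matrix.mul_apply, Fin.sum_univ_two] at h
    rw [hc] at h
    simp at h
    simp [h] at hdet
  · exact key g hc
end

section
/- Let ℓ be an odd prime. Then GL₂(F_ℓ) is generated by the set J = {g ∈ GL₂(F_ℓ) : det(g - I) ≠ 0}, i.e., by the set of elements of GL₂(F_ℓ) that fix no nonzero vector of F_ℓ². -/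
/-- For an odd prime `ℓ`, the group `GL₂(F_ℓ)` is generated by the set of
elements `g` with `det (g - I) ≠ 0`, i.e. by the elements fixing no nonzero
vector of `F_ℓ²`. -/
theorem stmt8 (ℓ : ℕ) (hℓ : ℓ.Prime) (hodd : Odd ℓ) :
    Subgroup.closure {g : GL (Fin 2) (ZMod ℓ) |
      Matrix.det ((g : Matrix (Fin 2) (Fin 2) (ZMod ℓ)) - 1) ≠ 0} = ⊤ := by
  haveI : Fact ℓ.Prime := ⟨hℓ⟩
  have h2 : (2 : ZMod ℓ) ≠ 0 := by
    intro h
    have h' : ((2 : ℕ) : ZMod ℓ) = 0 := by exact_mod_cast h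
    rw [ZMod.natCast_eq_zero_iff] at h'
    have h3 := (Nat.prime_dvd_prime_iff_eq hℓ Nat.prime_two).1 h'
    subst h3
    exact absurd hodd (by decide)
  set S := {g : GL (Fin 2) (ZMod ℓ) |
      Matrix.det ((g : Matrix (Fin 2) (Fin 2) (ZMod ℓ)) - 1) ≠ 0} with hS
  -- elements of determinant different from `-1`
  have key : ∀ g : GL (Fin 2) (ZMod ℓ),
      Matrix.det (g : Matrix (Fin 2) (Fin 2) (ZMod ℓ)) ≠ -1 → g ∈ Subgroup.closure S := by
    intro g hg
    by_cases hgS : g ∈ S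
    · exact Subgroup.subset_closure hgS
    · have h1 : (-1 : GL (Fin 2) (ZMod ℓ)) ∈ S := by
        simp only [hS, Set.mem_setOf_eq, Matrix.det_fin_two]
        simp only [Units.val_neg, Units.val_one, Matrix.sub_apply, Matrix.neg_apply]
        simp
        intro h
        apply h2
        linear_combination -h
      have h3 : -g ∈ S := by
        simp only [hS, Set.mem_setOf_eq, Matrix.det_fin_two, not_not] at hgS hg ⊢
        simp [Matrix.sub_apply] at hgS hg ⊢
        intro h
        have : (2 : ZMod ℓ) * (g 0 0 * g 1 1 - g 0 1 * g 1 0 + 1) = 0 := by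
          linear_combination h + hgS
        rcases mul_eq_zero.1 this with h | h
        · exact h2 h
        · exact hg (by linear_combination h)
      have := mul_mem (Subgroup.subset_closure h1) (Subgroup.subset_closure h3)
      simpa using this
  rw [eq_top_iff]
  intro g _
  by_cases hg : Matrix.det (g : Matrix (Fin 2) (Fin 2) (ZMod ℓ)) = -1
  · let k : GL (Fin 2) (ZMod ℓ) := Matrix.GeneralLinearGroup.mkOfDetNeZero
      !![0, 1; 1, -1] (by simp [Matrix.det_fin_two])
    have hk : (k : Matrix (Fin 2) (Fin 2) (ZMod ℓ)) = !![0, 1; 1, -1] := rfl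
    have hkS : k ∈ S := by
      simp only [hS, Set.mem_setOf_eq, hk, Matrix.det_fin_two]
      simp
    have hgk : g * k ∈ Subgroup.closure S := by
      apply key
      rw [Units.val_mul, Matrix.det_mul, hg, hk]
      simp only [Matrix.det_fin_two_of]
      intro h
      apply h2
      linear_combination h
    exact (Subgroup.mul_mem_cancel_right _ (Subgroup.subset_closure hkS)).1 hgk
  · exact key g hg
end

section
/- Let B be the Borel subgroup of GL₂(F₃) consisting of all upper triangular invertible matrices [[x, b], [0, y]] with x, y ∈ F₃^×, b ∈ F₃. Then the subgroup of B generated by the set {g ∈ B : det(g - I) ≠ 0} is exactly {g ∈ B : det(g) = 1}, which is a normal subgroup of B of index 2. -/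
/-- Upper triangular elements of `GL₂(F₃)` with a condition on the diagonal, as triples. -/
noncomputable def borelEquiv (P : ZMod 3 → ZMod 3 → Prop) (hP : ∀ x y, P x y → x * y ≠ 0) :
    {b : GL (Fin 2) (ZMod 3) // (b : Matrix (Fin 2) (Fin 2) (ZMod 3)) 1 0 = 0 ∧
      P ((b : Matrix (Fin 2) (Fin 2) (ZMod 3)) 0 0)
        ((b : Matrix (Fin 2) (Fin 2) (ZMod 3)) 1 1)} ≃
    {p : ZMod 3 × ZMod 3 × ZMod 3 // P p.1 p.2.1} where
  toFun b := ⟨(b.1.1 0 0, b.1.1 1 1, b.1.1 0 1), b.2.2⟩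
  invFun p := ⟨Matrix.GeneralLinearGroup.mkOfDetNeZero !![p.1.1, p.1.2.2; 0, p.1.2.1]
    (by simpa [Matrix.det_fin_two] using hP _ _ p.2), by
      simpa [Matrix.GeneralLinearGroup.mkOfDetNeZero] using p.2⟩
  left_inv b := by
    obtain ⟨b, h0, h1⟩ := b
    apply Subtype.ext
    apply Units.ext
    ext i j
    fin_cases i <;> fin_cases j <;> simp [Matrix.GeneralLinearGroup.mkOfDetNeZero, h0]
  right_inv p := by
    apply Subtype.ext
    simp [Matrix.GeneralLinearGroup.mkOfDetNeZero]

theorem gl_det_ne (g : GL (Fin 2) (ZMod 3)) :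
    Matrix.det (g : Matrix (Fin 2) (Fin 2) (ZMod 3)) ≠ 0 :=
  ((Matrix.isUnit_iff_isUnit_det _).1 g.isUnit).ne_zero

theorem upper_mul (g h : GL (Fin 2) (ZMod 3))
    (hg : (g : Matrix (Fin 2) (Fin 2) (ZMod 3)) 1 0 = 0)
    (hh : (h : Matrix (Fin 2) (Fin 2) (ZMod 3)) 1 0 = 0) :
    ((g * h : GL (Fin 2) (ZMod 3)) : Matrix (Fin 2) (Fin 2) (ZMod 3)) 1 0 = 0 := by
  simp [Matrix.mul_apply, Fin.sum_univ_two, hg, hh]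

theorem upper_inv (g : GL (Fin 2) (ZMod 3))
    (hg : (g : Matrix (Fin 2) (Fin 2) (ZMod 3)) 1 0 = 0) :
    ((g⁻¹ : GL (Fin 2) (ZMod 3)) : Matrix (Fin 2) (Fin 2) (ZMod 3)) 1 0 = 0 := by
  rw [Matrix.coe_units_inv, Matrix.inv_def, Matrix.adjugate_fin_two]
  simp [hg]


/-- In the Borel subgroup `B` of upper triangular matrices in `GL₂(F₃)`, the
subgroup generated by `{g ∈ B : det (g - I) ≠ 0}` is exactly
`{g ∈ B : det g = 1}`, a normal subgroup of `B` of index `2`. -/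
theorem stmt9 (K : Subgroup (GL (Fin 2) (ZMod 3)))
    (hK : K = Subgroup.closure {h : GL (Fin 2) (ZMod 3) |
      (h : Matrix (Fin 2) (Fin 2) (ZMod 3)) 1 0 = 0 ∧
      Matrix.det ((h : Matrix (Fin 2) (Fin 2) (ZMod 3)) - 1) ≠ 0}) :
    (∀ g : GL (Fin 2) (ZMod 3),
      g ∈ K ↔ ((g : Matrix (Fin 2) (Fin 2) (ZMod 3)) 1 0 = 0 ∧
        Matrix.det (g : Matrix (Fin 2) (Fin 2) (ZMod 3)) = 1)) ∧
    (∀ b g : GL (Fin 2) (ZMod 3),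
      (b : Matrix (Fin 2) (Fin 2) (ZMod 3)) 1 0 = 0 → g ∈ K → b * g * b⁻¹ ∈ K) ∧
    Nat.card {b : GL (Fin 2) (ZMod 3) //
      (b : Matrix (Fin 2) (Fin 2) (ZMod 3)) 1 0 = 0} = 2 * Nat.card K := by
  have key : ∀ g : GL (Fin 2) (ZMod 3),
      g ∈ K ↔ ((g : Matrix (Fin 2) (Fin 2) (ZMod 3)) 1 0 = 0 ∧
        Matrix.det (g : Matrix (Fin 2) (Fin 2) (ZMod 3)) = 1) := by
    intro g
    constructor
    · intro hg
      rw [hK] at hg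
      induction hg using Subgroup.closure_induction with
      | mem x hx =>
        obtain ⟨h0, h1⟩ := hx
        refine ⟨h0, ?_⟩
        have h2 := gl_det_ne x
        rw [Matrix.det_fin_two] at h1 h2 ⊢
        simp only [Matrix.sub_apply, Matrix.one_apply, h0] at h1 h2 ⊢
        revert h1 h2
        generalize (x : Matrix (Fin 2) (Fin 2) (ZMod 3)) 0 0 = a
        generalize (x : Matrix (Fin 2) (Fin 2) (ZMod 3)) 1 1 = b
        generalize (x : Matrix (Fin 2) (Fin 2) (ZMod 3)) 0 1 = c
        revert a b c
        decide
      | one => simp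
      | mul x y _ _ hx hy =>
        refine ⟨upper_mul x y hx.1 hy.1, ?_⟩
        rw [Units.val_mul, Matrix.det_mul, hx.2, hy.2, one_mul]
      | inv x _ hx =>
        refine ⟨upper_inv x hx.1, ?_⟩
        rw [Matrix.coe_units_inv, Matrix.det_nonsing_inv, hx.2]
        simp
    · rintro ⟨h0, h1⟩
      have h2 : ((g : Matrix (Fin 2) (Fin 2) (ZMod 3)) - 1).det ≠ 0 ∨
          (-(g : Matrix (Fin 2) (Fin 2) (ZMod 3)) - 1).det ≠ 0 := by
        rw [Matrix.det_fin_two] at h1 ⊢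
        rw [Matrix.det_fin_two]
        simp only [Matrix.sub_apply, Matrix.neg_apply, Matrix.one_apply, h0] at h1 ⊢
        revert h1
        generalize (g : Matrix (Fin 2) (Fin 2) (ZMod 3)) 0 0 = a
        generalize (g : Matrix (Fin 2) (Fin 2) (ZMod 3)) 1 1 = b
        generalize (g : Matrix (Fin 2) (Fin 2) (ZMod 3)) 0 1 = c
        revert a b c
        decide
      rw [hK]
      rcases h2 with h2 | h2
      · exact Subgroup.subset_closure ⟨h0, h2⟩
      · have e : g = (-1) * (-g) := by simp
        rw [e]
        refine Subgroup.mul_mem _ (Subgroup.subset_closure ⟨?_, ?_⟩)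
          (Subgroup.subset_closure ⟨?_, ?_⟩)
        · simp
        · rw [Matrix.det_fin_two]
          simp
          decide
        · simp [h0]
        · simpa using h2
  refine ⟨key, ?_, ?_⟩
  · intro b g hb hg
    rw [key] at hg ⊢
    refine ⟨upper_mul _ _ (upper_mul _ _ hb hg.1) (upper_inv _ hb), ?_⟩
    rw [Units.val_mul, Units.val_mul, Matrix.det_mul, Matrix.det_mul, hg.2, mul_one,
      ← Matrix.det_mul, ← Units.val_mul, mul_inv_cancel, Units.val_one, Matrix.det_one]
  · have c1 := Nat.card_congr (borelEquiv (fun x y => x * y ≠ 0) (fun _ _ h => h))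
    have c2 := Nat.card_congr (borelEquiv (fun x y => x * y = 1)
      (fun _ _ h => by rw [h]; decide))
    have d1 := Nat.card_congr (Equiv.subtypeEquivRight (fun b : GL (Fin 2) (ZMod 3) =>
      (show (b : Matrix (Fin 2) (Fin 2) (ZMod 3)) 1 0 = 0 ↔
        (b : Matrix (Fin 2) (Fin 2) (ZMod 3)) 1 0 = 0 ∧
        (b : Matrix (Fin 2) (Fin 2) (ZMod 3)) 0 0 *
          (b : Matrix (Fin 2) (Fin 2) (ZMod 3)) 1 1 ≠ 0 from
        ⟨fun h => ⟨h, by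
          have := gl_det_ne b
          rwa [Matrix.det_fin_two, h, mul_zero, sub_zero] at this⟩, fun h => h.1⟩)))
    have d2 := Nat.card_congr (Equiv.subtypeEquivRight (fun b : GL (Fin 2) (ZMod 3) =>
      (show b ∈ K ↔
        (b : Matrix (Fin 2) (Fin 2) (ZMod 3)) 1 0 = 0 ∧
        (b : Matrix (Fin 2) (Fin 2) (ZMod 3)) 0 0 *
          (b : Matrix (Fin 2) (Fin 2) (ZMod 3)) 1 1 = 1 by
        rw [key, Matrix.det_fin_two]
        refine and_congr_right fun h => ?_
        rw [h, mul_zero, sub_zero])))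
    rw [d1, c1]
    refine Eq.trans ?_ (congrArg (2 * ·) (d2.trans c2).symm)
    simp only [Nat.card_eq_fintype_card]
    decide
end

section
/- Let N be the normalizer of the split Cartan subgroup of GL₂(F₃), i.e., the subgroup consisting of all invertible matrices of the form [[x, 0], [0, y]] or [[0, x], [y, 0]] with x, y ∈ F₃^×. Then the subgroup of N generated by the set {g ∈ N : det(g - I) ≠ 0} is exactly {g ∈ N : det(g) = 1}; this subgroup is cyclic of order 4, generated by the matrix [[0, 1], [-1, 0]], and is normal in N. -/
/-- The generator `[[0, 1], [-1, 0]]`. -/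
def zGen : GL (Fin 2) (ZMod 3) :=
  ⟨!![0, 1; -1, 0], !![0, -1; 1, 0], by decide, by decide⟩

/-- Being a monomial matrix. -/
def Mono (A : Matrix (Fin 2) (Fin 2) (ZMod 3)) : Prop :=
  (A 0 1 = 0 ∧ A 1 0 = 0) ∨ (A 0 0 = 0 ∧ A 1 1 = 0)

lemma zGen_order : orderOf zGen = 4 := by
  have h := orderOf_eq_prime_pow (x := zGen) (p := 2) (n := 1)
    (fun h => absurd (congrArg Units.val h) (by decide)) (Units.ext (by decide))
  simpa using h

lemma mat_det_one (A : Matrix (Fin 2) (Fin 2) (ZMod 3)) (hA : Mono A) (hd : A.det = 1) :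
    ∃ k : Fin 4, A = ((zGen ^ (k : ℕ) : GL (Fin 2) (ZMod 3)) : Matrix _ _ _) := by
  have key : ∀ a b c d : ZMod 3, (b = 0 ∧ c = 0 ∨ a = 0 ∧ d = 0) → a * d - b * c = 1 →
      ∃ k : Fin 4, !![a, b; c, d] =
        ((!![0, 1; -1, 0] : Matrix (Fin 2) (Fin 2) (ZMod 3)) ^ (k : ℕ)) := by decide
  rw [Matrix.det_fin_two] at hd
  obtain ⟨k, hk⟩ := key _ _ _ _ hA hd
  refine ⟨k, ?_⟩
  rw [Matrix.eta_fin_two A, hk, Units.val_pow_eq_pow_val]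
  rfl

lemma mem_iff (g : GL (Fin 2) (ZMod 3)) :
    g ∈ Subgroup.zpowers zGen ↔
      Mono (g : Matrix (Fin 2) (Fin 2) (ZMod 3)) ∧
        Matrix.det (g : Matrix (Fin 2) (Fin 2) (ZMod 3)) = 1 := by
  constructor
  · intro h
    have hf : IsOfFinOrder zGen := isOfFinOrder_of_finite zGen
    obtain ⟨k, hk, rfl⟩ := (IsOfFinOrder.mem_zpowers_iff_mem_range_orderOf hf).1 h
      |> Finset.mem_image.1
    rw [zGen_order, Finset.mem_range] at hk
    unfold Mono
    rw [Units.val_pow_eq_pow_val]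
    have hz : (zGen : Matrix (Fin 2) (Fin 2) (ZMod 3)) = !![0, 1; -1, 0] := rfl
    rw [hz]
    interval_cases k <;> decide
  · rintro ⟨h, hd⟩
    obtain ⟨k, hk⟩ := mat_det_one _ h hd
    rw [Units.ext hk]
    exact Subgroup.npow_mem_zpowers _ _

lemma gen_det (g : GL (Fin 2) (ZMod 3)) (h : Mono (g : Matrix (Fin 2) (Fin 2) (ZMod 3)))
    (hd : Matrix.det ((g : Matrix (Fin 2) (Fin 2) (ZMod 3)) - 1) ≠ 0) :
    Matrix.det (g : Matrix (Fin 2) (Fin 2) (ZMod 3)) = 1 := by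
  have key : ∀ a b c d : ZMod 3, (b = 0 ∧ c = 0 ∨ a = 0 ∧ d = 0) → a * d - b * c ≠ 0 →
      (a - 1) * (d - 1) - b * c ≠ 0 → a * d - b * c = 1 := by decide
  have hu : Matrix.det (g : Matrix (Fin 2) (Fin 2) (ZMod 3)) ≠ 0 :=
    ((Matrix.isUnit_iff_isUnit_det _).1 g.isUnit).ne_zero
  rw [Matrix.det_fin_two] at hd hu ⊢
  exact key _ _ _ _ h hu (by simpa using hd)

lemma mono_mul (A B : Matrix (Fin 2) (Fin 2) (ZMod 3)) (hA : Mono A) (hB : Mono B) :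
    Mono (A * B) := by
  unfold Mono at *
  simp only [Matrix.mul_apply, Fin.sum_univ_two]
  rcases hA with ⟨h1, h2⟩ | ⟨h1, h2⟩ <;> rcases hB with ⟨h3, h4⟩ | ⟨h3, h4⟩ <;>
    simp [h1, h2, h3, h4]

lemma mono_inv (g : GL (Fin 2) (ZMod 3)) (h : Mono (g : Matrix (Fin 2) (Fin 2) (ZMod 3))) :
    Mono ((g⁻¹ : GL (Fin 2) (ZMod 3)) : Matrix (Fin 2) (Fin 2) (ZMod 3)) := by
  rw [Matrix.coe_units_inv, Matrix.inv_def, Matrix.adjugate_fin_two]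
  unfold Mono at *
  rcases h with ⟨h1, h2⟩ | ⟨h1, h2⟩ <;> simp [h1, h2]

lemma closure_eq (K : Subgroup (GL (Fin 2) (ZMod 3)))
    (hK : K = Subgroup.closure {h : GL (Fin 2) (ZMod 3) |
      Mono (h : Matrix (Fin 2) (Fin 2) (ZMod 3)) ∧
      Matrix.det ((h : Matrix (Fin 2) (Fin 2) (ZMod 3)) - 1) ≠ 0}) :
    K = Subgroup.zpowers zGen := by
  rw [hK]
  apply le_antisymm
  · rw [Subgroup.closure_le]
    rintro g ⟨h, hd⟩
    exact (mem_iff g).2 ⟨h, gen_det g h hd⟩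
  · rw [Subgroup.zpowers_le]
    refine Subgroup.subset_closure ⟨Or.inr ⟨rfl, rfl⟩, ?_⟩
    change Matrix.det ((!![0, 1; -1, 0] : Matrix (Fin 2) (Fin 2) (ZMod 3)) - 1) ≠ 0
    decide

/-- In the normalizer `N` of the split Cartan subgroup of `GL₂(F₃)` (the
monomial matrices), the subgroup generated by `{g ∈ N : det (g - I) ≠ 0}` is
exactly `{g ∈ N : det g = 1}`; it is cyclic of order `4`, generated by
`[[0, 1], [-1, 0]]`, and normal in `N`. -/
theorem stmt10 (K : Subgroup (GL (Fin 2) (ZMod 3)))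
    (hK : K = Subgroup.closure {h : GL (Fin 2) (ZMod 3) |
      (((h : Matrix (Fin 2) (Fin 2) (ZMod 3)) 0 1 = 0 ∧
          (h : Matrix (Fin 2) (Fin 2) (ZMod 3)) 1 0 = 0) ∨
        ((h : Matrix (Fin 2) (Fin 2) (ZMod 3)) 0 0 = 0 ∧
          (h : Matrix (Fin 2) (Fin 2) (ZMod 3)) 1 1 = 0)) ∧
      Matrix.det ((h : Matrix (Fin 2) (Fin 2) (ZMod 3)) - 1) ≠ 0}) :
    (∀ g : GL (Fin 2) (ZMod 3),
      g ∈ K ↔ ((((g : Matrix (Fin 2) (Fin 2) (ZMod 3)) 0 1 = 0 ∧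
          (g : Matrix (Fin 2) (Fin 2) (ZMod 3)) 1 0 = 0) ∨
        ((g : Matrix (Fin 2) (Fin 2) (ZMod 3)) 0 0 = 0 ∧
          (g : Matrix (Fin 2) (Fin 2) (ZMod 3)) 1 1 = 0)) ∧
        Matrix.det (g : Matrix (Fin 2) (Fin 2) (ZMod 3)) = 1)) ∧
    (∃ z : GL (Fin 2) (ZMod 3),
      (z : Matrix (Fin 2) (Fin 2) (ZMod 3)) = !![0, 1; -1, 0] ∧
      K = Subgroup.zpowers z) ∧
    Nat.card K = 4 ∧
    (∀ b g : GL (Fin 2) (ZMod 3),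
      (((b : Matrix (Fin 2) (Fin 2) (ZMod 3)) 0 1 = 0 ∧
          (b : Matrix (Fin 2) (Fin 2) (ZMod 3)) 1 0 = 0) ∨
        ((b : Matrix (Fin 2) (Fin 2) (ZMod 3)) 0 0 = 0 ∧
          (b : Matrix (Fin 2) (Fin 2) (ZMod 3)) 1 1 = 0)) →
      g ∈ K → b * g * b⁻¹ ∈ K) := by
  have hz := closure_eq K hK
  subst hz
  refine ⟨mem_iff, ⟨zGen, rfl, rfl⟩, ?_, ?_⟩
  · rw [Nat.card_zpowers, zGen_order]
  · intro b g hb hg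
    obtain ⟨h, hd⟩ := (mem_iff g).1 hg
    refine (mem_iff _).2 ⟨mono_mul _ _ (mono_mul _ _ hb h) (mono_inv b hb), ?_⟩
    have hb1 : Matrix.det (b : Matrix (Fin 2) (Fin 2) (ZMod 3)) *
        Matrix.det ((b⁻¹ : GL (Fin 2) (ZMod 3)) : Matrix (Fin 2) (Fin 2) (ZMod 3)) = 1 := by
      rw [← Matrix.det_mul, ← Units.val_mul, mul_inv_cancel, Units.val_one, Matrix.det_one]
    rw [Units.val_mul, Units.val_mul, Matrix.det_mul, Matrix.det_mul, hd, mul_one, hb1]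
end

section
/- Let n > 1 be an odd squarefree integer and let G be a subgroup of GL₂(ℤ/nℤ) such that: (a) for every prime ℓ dividing n, the image of G under the reduction map GL₂(ℤ/nℤ) → GL₂(ℤ/ℓℤ) is all of GL₂(ℤ/ℓℤ), and (b) the image of G under the determinant map is all of (ℤ/nℤ)^×. Then G = GL₂(ℤ/nℤ). -/
namespace Stmt14Aux

open Matrix

/-- Upper elementary matrix. -/
def elemE {R : Type*} [CommRing R] (x : R) : GL (Fin 2) R :=
  ⟨!![1, x; 0, 1], !![1, -x; 0, 1],
    by ext i j; fin_cases i <;> fin_cases j <;> simp [Matrix.mul_apply, Fin.sum_univ_two],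
    by ext i j; fin_cases i <;> fin_cases j <;> simp [Matrix.mul_apply, Fin.sum_univ_two]⟩

/-- Lower elementary matrix. -/
def elemF {R : Type*} [CommRing R] (x : R) : GL (Fin 2) R :=
  ⟨!![1, 0; x, 1], !![1, 0; -x, 1],
    by ext i j; fin_cases i <;> fin_cases j <;> simp [Matrix.mul_apply, Fin.sum_univ_two],
    by ext i j; fin_cases i <;> fin_cases j <;> simp [Matrix.mul_apply, Fin.sum_univ_two]⟩

/-- The matrix `diag(u, 1)`. -/
def diagU {R : Type*} [CommRing R] (u : Rˣ) : GL (Fin 2) R :=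
  ⟨!![(u : R), 0; 0, 1], !![((u⁻¹ : Rˣ) : R), 0; 0, 1],
    by ext i j; fin_cases i <;> fin_cases j <;> simp [Matrix.mul_apply, Fin.sum_univ_two],
    by ext i j; fin_cases i <;> fin_cases j <;> simp [Matrix.mul_apply, Fin.sum_univ_two]⟩

@[simp] lemma coe_elemE {R : Type*} [CommRing R] (x : R) :
    (elemE x : Matrix (Fin 2) (Fin 2) R) = !![1, x; 0, 1] := rfl

@[simp] lemma coe_elemF {R : Type*} [CommRing R] (x : R) :
    (elemF x : Matrix (Fin 2) (Fin 2) R) = !![1, 0; x, 1] := rfl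

@[simp] lemma coe_diagU {R : Type*} [CommRing R] (u : Rˣ) :
    (diagU u : Matrix (Fin 2) (Fin 2) R) = !![(u : R), 0; 0, 1] := rfl

lemma elemE_pow {R : Type*} [CommRing R] (x : R) (k : ℕ) : elemE x ^ k = elemE (k * x) := by
  induction k with
  | zero => ext i j; fin_cases i <;> fin_cases j <;> simp
  | succ k ih =>
    rw [pow_succ, ih]
    ext i j; fin_cases i <;> fin_cases j <;> simp
    ring

lemma elemF_pow {R : Type*} [CommRing R] (x : R) (k : ℕ) : elemF x ^ k = elemF (k * x) := by
  induction k with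
  | zero => ext i j; fin_cases i <;> fin_cases j <;> simp
  | succ k ih =>
    rw [pow_succ, ih]
    ext i j; fin_cases i <;> fin_cases j <;> simp
    ring

lemma elemE_comm {R : Type*} [CommRing R] (u : Rˣ) (hu : (u : R) = 2) (x : R) :
    diagU u * elemE x * (diagU u)⁻¹ * (elemE x)⁻¹ = elemE x := by
  rw [mul_inv_eq_iff_eq_mul, mul_inv_eq_iff_eq_mul]
  ext i j; fin_cases i <;> fin_cases j <;> simp [hu]
  ring

lemma elemF_comm {R : Type*} [CommRing R] (u : Rˣ) (hu : (u : R) = 2) (x : R) :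
    (diagU u)⁻¹ * elemF x * (diagU u)⁻¹⁻¹ * (elemF x)⁻¹ = elemF x := by
  rw [mul_inv_eq_iff_eq_mul, inv_inv, mul_assoc, inv_mul_eq_iff_eq_mul]
  ext i j; fin_cases i <;> fin_cases j <;> simp [hu]
  ring

/-- stable range condition for `ZMod n` -/
lemma exists_unit (n : ℕ) (hn : n ≠ 0) (a c : ZMod n) (h : IsCoprime a c) :
    ∃ t, IsUnit (a + t * c) := by
  have : NeZero n := ⟨hn⟩
  obtain ⟨A, rfl⟩ := ZMod.natCast_zmod_surjective a
  obtain ⟨C, rfl⟩ := ZMod.natCast_zmod_surjective c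
  set T : ℕ := ∏ p ∈ n.primeFactors.filter (fun p => ¬ p ∣ A), p with hT
  refine ⟨(T : ZMod n), ?_⟩
  have : ((A : ZMod n) + T * C) = ((A + T * C : ℕ) : ZMod n) := by push_cast; rfl
  rw [this, ZMod.isUnit_iff_coprime]
  refine Nat.coprime_of_dvd ?_
  intro p hp h1 h2
  by_cases hpA : p ∣ A
  · have h3 : p ∣ T * C := (Nat.dvd_add_right hpA).1 h1
    rcases hp.dvd_mul.1 h3 with h4 | h4
    · rw [hT, hp.prime.dvd_finsetProd_iff] at h4
      obtain ⟨q, hq, hpq⟩ := h4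
      rw [Finset.mem_filter, Nat.mem_primeFactors] at hq
      rw [Nat.prime_dvd_prime_iff_eq hp hq.1.1] at hpq
      exact hq.2 (hpq ▸ hpA)
    · have : Fact p.Prime := ⟨hp⟩
      have h5 := h.map (ZMod.castHom h2 (ZMod p))
      rw [map_natCast, map_natCast, (ZMod.natCast_eq_zero_iff _ _).2 hpA,
        (ZMod.natCast_eq_zero_iff _ _).2 h4] at h5
      obtain ⟨x, y, hxy⟩ := h5
      simp at hxy
  · have h3 : p ∣ T := Finset.dvd_prod_of_mem _ (by
      rw [Finset.mem_filter, Nat.mem_primeFactors]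
      exact ⟨⟨hp, h2, hn⟩, hpA⟩)
    exact hpA ((Nat.dvd_add_left (h3.mul_right C)).1 h1)

lemma mem_of_det_one (n : ℕ) (hn : n ≠ 0) (H : Subgroup (GL (Fin 2) (ZMod n)))
    (hE : ∀ x, elemE x ∈ H) (hF : ∀ x, elemF x ∈ H) (s : GL (Fin 2) (ZMod n))
    (hs : Matrix.GeneralLinearGroup.det s = 1) : s ∈ H := by
  have hd : (s : Matrix (Fin 2) (Fin 2) (ZMod n)).det = 1 := by
    have := congrArg Units.val hs
    simpa using this
  rw [Matrix.det_fin_two] at hd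
  obtain ⟨t, ⟨u, hu⟩⟩ := exists_unit n hn (s 0 0) (s 1 0)
    ⟨s 1 1, - s 0 1, by linear_combination hd⟩
  set y : ZMod n := (1 - s 1 0) * ((u⁻¹ : (ZMod n)ˣ) : ZMod n) with hy
  have hyu : y * (s 0 0 + t * s 1 0) = 1 - s 1 0 := by
    rw [← hu, hy, mul_assoc, Units.inv_mul, mul_one]
  have key : elemF (-1) * (elemE (1 - (u : ZMod n)) * (elemF y * (elemE t * s))) =
      elemE ((s 0 1 + t * s 1 1) + (1 - (u : ZMod n)) * (s 1 1 + y * (s 0 1 + t * s 1 1))) := by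
    ext i j
    fin_cases i <;> fin_cases j <;>
      simp [Matrix.mul_apply, Fin.sum_univ_two, Matrix.vecMul, dotProduct, hu]
    · linear_combination (1 - (s 0 0 + t * s 1 0)) * hyu
    · ring
    · linear_combination (s 0 0 + t * s 1 0) * hyu
    · linear_combination hd + (s 0 1 + t * s 1 1) * hyu
  rw [← H.mul_mem_cancel_left (hE t), ← H.mul_mem_cancel_left (hF y),
    ← H.mul_mem_cancel_left (hE (1 - (u : ZMod n))), ← H.mul_mem_cancel_left (hF (-1)), key]
  exact hE _

/-- Reduction. -/
abbrev red {n d : ℕ} (h : d ∣ n) : GL (Fin 2) (ZMod n) →* GL (Fin 2) (ZMod d) :=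
  Matrix.GeneralLinearGroup.map (ZMod.castHom h (ZMod d))

lemma red_red {n d e : ℕ} (h : d ∣ n) (h' : e ∣ d) (s : GL (Fin 2) (ZMod n)) :
    red h' (red h s) = red (h'.trans h) s := by
  ext i j
  have h := congrArg (fun φ : ZMod n →+* ZMod e => φ (s i j)) (Subsingleton.elim
    ((ZMod.castHom h' (ZMod e)).comp (ZMod.castHom h (ZMod d)))
    (ZMod.castHom (h'.trans h) (ZMod e)))
  exact h

lemma det_red {n d : ℕ} (h : d ∣ n) (s : GL (Fin 2) (ZMod n)) :
    GeneralLinearGroup.det (red h s) =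
      Units.map (ZMod.castHom h (ZMod d) : ZMod n →* ZMod d) (GeneralLinearGroup.det s) :=
  GeneralLinearGroup.map_det _ _

lemma zmod_eq_zero {m : ℕ} (hm : m ≠ 0) (hsf : Squarefree m) (x : ZMod m)
    (h : ∀ p (_ : p.Prime) (hd : p ∣ m), ZMod.castHom hd (ZMod p) x = 0) : x = 0 := by
  have : NeZero m := ⟨hm⟩
  obtain ⟨A, rfl⟩ := ZMod.natCast_zmod_surjective x
  rw [ZMod.natCast_eq_zero_iff]
  rw [← Nat.prod_primeFactors_of_squarefree hsf]
  refine Finset.prod_primes_dvd _ (fun p hp => (Nat.prime_of_mem_primeFactors hp).prime) ?_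
  intro p hp
  have := h p (Nat.prime_of_mem_primeFactors hp) (Nat.dvd_of_mem_primeFactors hp)
  rwa [map_natCast, ZMod.natCast_eq_zero_iff] at this

lemma exists_exponent (m ℓ : ℕ) (hℓ : ℓ.Prime) (hm : m ≠ 0) (hsf : Squarefree m) (hodd : Odd m)
    (hlt : ∀ p, p.Prime → p ∣ m → p < ℓ) :
    ∃ k : ℕ, k.Coprime ℓ ∧ ∀ b : GL (Fin 2) (ZMod m), b ^ k = 1 := by
  refine ⟨∏ p ∈ m.primeFactors, Nat.card (GL (Fin 2) (ZMod p)), ?_, ?_⟩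
  · refine Nat.Coprime.prod_left ?_
    intro p hp
    have hpp := Nat.prime_of_mem_primeFactors hp
    have hpm := Nat.dvd_of_mem_primeFactors hp
    have : Fact p.Prime := ⟨hpp⟩
    have hl := hlt p hpp hpm
    have hpodd : Odd p := hodd.of_dvd_nat hpm
    have hℓodd : Odd ℓ := hℓ.odd_of_ne_two (by have := hpp.two_le; omega)
    have h1 := hpp.two_le
    have hcop : ∀ x, 0 < x → x < ℓ → Nat.Coprime x ℓ := fun x hx hxl =>
      ((hℓ.coprime_iff_not_dvd.2 (Nat.not_dvd_of_pos_of_lt hx hxl)).symm)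
    obtain ⟨a, ha⟩ := hpodd
    obtain ⟨b, hb⟩ := hℓodd
    have hcard : Nat.card (GL (Fin 2) (ZMod p)) = (p - 1) * (p + 1) * (p * (p - 1)) := by
      rw [Matrix.card_GL_field]
      simp [Fin.prod_univ_two, ZMod.card]
      obtain ⟨q, rfl⟩ : ∃ q, p = q + 1 := ⟨p - 1, by omega⟩
      have e1 : (q + 1) ^ 2 - 1 = q * (q + 1 + 1) := by
        rw [Nat.sub_eq_iff_eq_add (Nat.one_le_pow _ _ (by omega))]; ring
      have e2 : (q + 1) ^ 2 - (q + 1) = (q + 1) * q := by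
        rw [Nat.sub_eq_iff_eq_add (by nlinarith)]; ring
      rw [e1, e2]; simp
    rw [hcard]
    have c1 := hcop (p - 1) (by omega) (by omega)
    have c2 := hcop (p + 1) (by omega) (by omega)
    have c3 := hcop p (by omega) (by omega)
    exact (c1.mul_left c2).mul_left (c3.mul_left c1)
  · intro b
    set k := ∏ p ∈ m.primeFactors, Nat.card (GL (Fin 2) (ZMod p)) with hk
    have h : ∀ p (_ : p.Prime) (hd : p ∣ m), red hd (b ^ k) = 1 := by
      intro p hp hd
      rw [map_pow]
      obtain ⟨c, hc⟩ : Nat.card (GL (Fin 2) (ZMod p)) ∣ k :=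
        Finset.dvd_prod_of_mem _ (Nat.mem_primeFactors.2 ⟨hp, hd, hm⟩)
      rw [hc, pow_mul, pow_card_eq_one', one_pow]
    ext i j
    rw [← sub_eq_zero]
    refine zmod_eq_zero hm hsf _ ?_
    intro p hp hd
    have h2 := congrArg (fun s : GL (Fin 2) (ZMod p) => s i j) (h p hp hd)
    have h3 := congrArg (fun s : GL (Fin 2) (ZMod p) => s i j) (map_one (red hd))
    rw [map_sub, sub_eq_zero]
    exact h2.trans h3.symm

lemma main (n : ℕ) : ∀ (_ : n ≠ 0) (_ : Odd n) (_ : Squarefree n)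
    (G : Subgroup (GL (Fin 2) (ZMod n)))
    (_ : ∀ (ℓ : ℕ) (_ : ℓ.Prime) (hdvd : ℓ ∣ n), Subgroup.map (red hdvd) G = ⊤)
    (_ : Subgroup.map Matrix.GeneralLinearGroup.det G = ⊤), G = ⊤ := by
  induction n using Nat.strong_induction_on with
  | _ n ih =>
  intro hn0 hodd hsf G hred hdet
  by_cases hn1 : n = 1
  · subst hn1
    rw [eq_top_iff]
    intro s _
    have : s = 1 := by ext i j; exact Subsingleton.elim _ _
    rw [this]; exact G.one_mem
  have hne : n.primeFactors.Nonempty := Nat.nonempty_primeFactors.2 (by omega)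
  obtain ⟨ℓ, hℓmem, hmax⟩ := n.primeFactors.exists_max_image id hne
  have hℓ := Nat.prime_of_mem_primeFactors hℓmem
  have hℓn := Nat.dvd_of_mem_primeFactors hℓmem
  obtain ⟨m, hnm⟩ := hℓn
  have hmn : m ∣ n := ⟨ℓ, by rw [hnm, mul_comm]⟩
  have hℓn : ℓ ∣ n := ⟨m, hnm⟩
  have hm0 : m ≠ 0 := by rintro rfl; simp at hnm; exact hn0 hnm
  have hsfm : Squarefree m := hsf.squarefree_of_dvd hmn
  have hoddm : Odd m := hodd.of_dvd_nat hmn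
  have hcop : Nat.Coprime ℓ m := by
    rw [hnm] at hsf
    exact Nat.coprime_of_squarefree_mul hsf
  have hmlt : m < n := by
    rw [hnm]; have := hℓ.two_le; have := Nat.pos_of_ne_zero hm0; nlinarith
  have hlt : ∀ p, p.Prime → p ∣ m → p < ℓ := by
    intro p hp hpm
    have h1 : p ≤ ℓ := hmax p (Nat.mem_primeFactors.2 ⟨hp, hpm.trans hmn, hn0⟩)
    refine lt_of_le_of_ne h1 ?_
    rintro rfl
    exact hp.one_lt.ne' (Nat.eq_one_of_dvd_coprimes hcop dvd_rfl hpm)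
  have : NeZero n := ⟨hn0⟩
  have : NeZero m := ⟨hm0⟩
  -- joint injectivity
  have hinj : ∀ x y : ZMod n, ZMod.castHom hℓn (ZMod ℓ) x = ZMod.castHom hℓn (ZMod ℓ) y →
      ZMod.castHom hmn (ZMod m) x = ZMod.castHom hmn (ZMod m) y → x = y := by
    intro x y h1 h2
    rw [← sub_eq_zero, ← map_sub] at h1 h2
    rw [← sub_eq_zero]
    obtain ⟨A, hA⟩ := ZMod.natCast_zmod_surjective (x - y)
    rw [← hA, map_natCast, ZMod.natCast_eq_zero_iff] at h1 h2
    rw [← hA, ZMod.natCast_eq_zero_iff, hnm]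
    exact hcop.mul_dvd_of_dvd_of_dvd h1 h2
  have hinjG : ∀ s t : GL (Fin 2) (ZMod n), red hℓn s = red hℓn t → red hmn s = red hmn t →
      s = t := by
    intro s t h1 h2
    ext i j
    exact hinj _ _ (congrArg (fun s : GL (Fin 2) (ZMod ℓ) => s i j) h1)
      (congrArg (fun s : GL (Fin 2) (ZMod m) => s i j) h2)
  -- the image modulo `m` is everything
  have hGm : Subgroup.map (red hmn) G = ⊤ := by
    refine ih m hmlt hm0 hoddm hsfm _ ?_ ?_
    · intro p hp hd
      rw [eq_top_iff]
      intro s _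
      have hs : s ∈ Subgroup.map (red (hd.trans hmn)) G := by
        rw [hred p hp (hd.trans hmn)]; trivial
      obtain ⟨g, hg, rfl⟩ := hs
      exact ⟨red hmn g, ⟨g, hg, rfl⟩, red_red _ _ _⟩
    · rw [eq_top_iff]
      intro u _
      obtain ⟨v, rfl⟩ := ZMod.unitsMap_surjective hmn u
      have hv : v ∈ Subgroup.map Matrix.GeneralLinearGroup.det G := by rw [hdet]; trivial
      obtain ⟨g, hg, rfl⟩ := hv
      exact ⟨red hmn g, ⟨g, hg, rfl⟩, det_red _ _⟩
  obtain ⟨k, hkℓ, hk⟩ := exists_exponent m ℓ hℓ hm0 hsfm hoddm hlt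
  obtain ⟨k', hk'⟩ : ∃ k' : ZMod ℓ, (k : ZMod ℓ) * k' = 1 :=
    isUnit_iff_exists_inv.1 ((ZMod.isUnit_iff_coprime k ℓ).2 hkℓ)
  have hpow : ∀ s : GL (Fin 2) (ZMod ℓ), s ^ k ∈ Subgroup.map (red hℓn) (G ⊓ (red hmn).ker) := by
    intro s
    have hs : s ∈ Subgroup.map (red hℓn) G := by rw [hred ℓ hℓ hℓn]; trivial
    obtain ⟨g, hg, rfl⟩ := hs
    refine ⟨g ^ k, ⟨G.pow_mem hg k, ?_⟩, map_pow _ _ _⟩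
    show red hmn (g ^ k) = 1
    rw [map_pow]; exact hk _
  have hSLℓ := mem_of_det_one ℓ hℓ.ne_zero (Subgroup.map (red hℓn) (G ⊓ (red hmn).ker))
    (fun x => by
      have := hpow (elemE (k' * x))
      rwa [elemE_pow, ← mul_assoc, hk', one_mul] at this)
    (fun x => by
      have := hpow (elemF (k' * x))
      rwa [elemF_pow, ← mul_assoc, hk', one_mul] at this)
  obtain ⟨u, hu⟩ : IsUnit (2 : ZMod m) := by
    have : IsUnit ((2 : ℕ) : ZMod m) :=
      (ZMod.isUnit_iff_coprime 2 m).2 (Nat.coprime_two_left.2 hoddm)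
    exact_mod_cast this
  have hcomm : ∀ s t : GL (Fin 2) (ZMod m), s * t * s⁻¹ * t⁻¹ ∈ Subgroup.map (red hmn)
      (G ⊓ (GeneralLinearGroup.det (n := Fin 2) (R := ZMod n)).ker) := by
    intro s t
    have hs : s ∈ Subgroup.map (red hmn) G := by rw [hGm]; trivial
    have ht : t ∈ Subgroup.map (red hmn) G := by rw [hGm]; trivial
    obtain ⟨g, hg, rfl⟩ := hs
    obtain ⟨h, hh, rfl⟩ := ht
    refine ⟨g * h * g⁻¹ * h⁻¹, ⟨?_, ?_⟩, by simp only [map_mul, map_inv]⟩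
    · exact G.mul_mem (G.mul_mem (G.mul_mem hg hh) (G.inv_mem hg)) (G.inv_mem hh)
    · show GeneralLinearGroup.det (g * h * g⁻¹ * h⁻¹) = 1
      simp only [map_mul, map_inv]
      rw [mul_comm (GeneralLinearGroup.det g)]
      simp
  have hSLm := mem_of_det_one m hm0 (Subgroup.map (red hmn)
      (G ⊓ (GeneralLinearGroup.det (n := Fin 2) (R := ZMod n)).ker))
    (fun x => by
      have := hcomm (diagU u) (elemE x)
      rwa [elemE_comm u hu] at this)
    (fun x => by
      have := hcomm (diagU u)⁻¹ (elemF x)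
      rwa [elemF_comm u hu] at this)
  have hSL : ∀ s : GL (Fin 2) (ZMod n), GeneralLinearGroup.det s = 1 → s ∈ G := by
    intro s hs
    obtain ⟨h, ⟨hhG, hhdet⟩, hhs⟩ := hSLm (red hmn s) (by rw [det_red, hs, map_one])
    replace hhdet : GeneralLinearGroup.det h = 1 := hhdet
    obtain ⟨h', ⟨hhG', hker⟩, hhs'⟩ := hSLℓ (red hℓn (s * h⁻¹))
      (by rw [det_red, map_mul, map_inv, hs, hhdet]; simp)
    replace hker : red hmn h' = 1 := hker
    have heq : h' = s * h⁻¹ := by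
      refine hinjG _ _ hhs' ?_
      rw [hker, map_mul, map_inv, hhs, mul_inv_cancel]
    have : s = h' * h := by rw [heq]; group
    rw [this]
    exact G.mul_mem hhG' hhG
  rw [eq_top_iff]
  intro s _
  have hv : GeneralLinearGroup.det s ∈ Subgroup.map Matrix.GeneralLinearGroup.det G := by
    rw [hdet]; trivial
  obtain ⟨g, hg, hgs⟩ := hv
  have h1 := hSL (s * g⁻¹) (by rw [map_mul, map_inv, hgs, mul_inv_cancel])
  have : s = s * g⁻¹ * g := by group
  rw [this]
  exact G.mul_mem h1 hg

end Stmt14Aux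


/-- If `n > 1` is odd and squarefree and `G ≤ GL₂(ℤ/nℤ)` surjects onto
`GL₂(ℤ/ℓℤ)` for every prime `ℓ ∣ n` and has surjective determinant, then
`G = GL₂(ℤ/nℤ)`. -/
theorem stmt14 (n : ℕ) (hn : 1 < n) (hodd : Odd n) (hsf : Squarefree n)
    (G : Subgroup (GL (Fin 2) (ZMod n)))
    (hred : ∀ (ℓ : ℕ) (_ : ℓ.Prime) (hdvd : ℓ ∣ n),
      Subgroup.map (Units.map
        (((ZMod.castHom hdvd (ZMod ℓ)).mapMatrix :
          Matrix (Fin 2) (Fin 2) (ZMod n) →+* Matrix (Fin 2) (Fin 2) (ZMod ℓ)) :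
            Matrix (Fin 2) (Fin 2) (ZMod n) →* Matrix (Fin 2) (Fin 2) (ZMod ℓ))) G = ⊤)
    (hdet : Subgroup.map Matrix.GeneralLinearGroup.det G = ⊤) :
    G = ⊤ := by
  exact Stmt14Aux.main n (by omega) hodd hsf G hred hdet
end

section
/- Let G be the subgroup of GL₂(F₅) generated by the matrices [[0, 3], [3, 4]], [[2, 0], [0, 2]], and [[3, 0], [4, 4]]. Then the image of G in the quotient of GL₂(F₅) by its subgroup of scalar matrices (i.e., the image of G in PGL₂(F₅)) is isomorphic to the symmetric group S₄. -/
/-- The subgroup of scalar matrices in `GL₂(F₅)`, i.e. the image of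
`(F₅)ˣ` under the scalar embedding. -/
def scalarSubgroup : Subgroup (GL (Fin 2) (ZMod 5)) :=
  (Units.map ((Matrix.scalar (Fin 2)).toMonoidHom :
    ZMod 5 →* Matrix (Fin 2) (Fin 2) (ZMod 5))).range

instance : scalarSubgroup.Normal := by
  constructor
  rintro x ⟨u, rfl⟩ g
  refine ⟨u, ?_⟩
  have hz : ∀ g' : GL (Fin 2) (ZMod 5),
      g' * (Units.map ((Matrix.scalar (Fin 2)).toMonoidHom :
        ZMod 5 →* Matrix (Fin 2) (Fin 2) (ZMod 5))) u =
      (Units.map ((Matrix.scalar (Fin 2)).toMonoidHom :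
        ZMod 5 →* Matrix (Fin 2) (Fin 2) (ZMod 5))) u * g' := by
    intro g'
    apply Units.ext
    simp only [Units.val_mul, Units.coe_map, RingHom.toMonoidHom_eq_coe,
      MonoidHom.coe_coe]
    exact ((Matrix.scalar_commute ((u : ZMod 5)) (fun r' => Commute.all _ _)
      (g' : Matrix (Fin 2) (Fin 2) (ZMod 5))).eq).symm
  rw [hz g, mul_assoc, mul_inv_cancel, mul_one]

/-- Four trace-zero matrices whose lines are permuted by `G` under conjugation. -/
def lineMat : Fin 4 → Matrix (Fin 2) (Fin 2) (ZMod 5) :=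
  ![!![0, 1; 3, 0], !![1, 1; 1, 4], !![1, 2; 3, 4], !![1, 3; 4, 4]]

/-- `A` permutes the four lines by `s`. -/
def Permutes (A : GL (Fin 2) (ZMod 5)) (s : Equiv.Perm (Fin 4)) : Prop :=
  ∀ i, ∃ c : ZMod 5, c ≠ 0 ∧ A.1 * lineMat i = c • (lineMat (s i) * A.1)

theorem fact_prime_five : Fact (Nat.Prime 5) := ⟨by norm_num⟩

theorem lineMat_inj : ∀ i j : Fin 4, ∀ c d : ZMod 5, c ≠ 0 →
    c • lineMat i = d • lineMat j → i = j := by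
  decide +kernel

theorem fix_scalar : ∀ a b c d : ZMod 5,
    (∀ i, ∃ k : ZMod 5, k ≠ 0 ∧
      !![a, b; c, d] * lineMat i = k • (lineMat i * !![a, b; c, d])) →
    b = 0 ∧ c = 0 ∧ a = d := by
  decide +kernel

theorem Permutes.one : Permutes 1 1 := fun i => ⟨1, by decide, by simp⟩

theorem Permutes.mul {A B : GL (Fin 2) (ZMod 5)} {s t : Equiv.Perm (Fin 4)}
    (hA : Permutes A s) (hB : Permutes B t) : Permutes (A * B) (s * t) := by
  haveI := fact_prime_five
  intro i
  obtain ⟨c, hc, h1⟩ := hB i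
  obtain ⟨d, hd, h2⟩ := hA (t i)
  refine ⟨c * d, mul_ne_zero hc hd, ?_⟩
  rw [Units.val_mul, mul_assoc, h1, mul_smul_comm, ← mul_assoc, h2, smul_mul_assoc, smul_smul,
    mul_assoc, Equiv.Perm.mul_apply]

theorem Permutes.inv {A : GL (Fin 2) (ZMod 5)} {s : Equiv.Perm (Fin 4)}
    (hA : Permutes A s) : Permutes A⁻¹ s⁻¹ := by
  haveI := fact_prime_five
  intro i
  obtain ⟨c, hc, h⟩ := hA (s⁻¹ i)
  rw [show s (s⁻¹ i) = i from s.apply_symm_apply i] at h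
  refine ⟨c⁻¹, inv_ne_zero hc, ?_⟩
  have h3 : lineMat (s⁻¹ i) * (A⁻¹).1 = c • ((A⁻¹).1 * lineMat i) := by
    calc lineMat (s⁻¹ i) * (A⁻¹).1
        = (A⁻¹).1 * (A.1 * lineMat (s⁻¹ i)) * (A⁻¹).1 := by
          rw [← mul_assoc (A⁻¹).1 A.1, Units.inv_mul, one_mul]
      _ = _ := by
          rw [h, mul_smul_comm, smul_mul_assoc, mul_assoc, mul_assoc, Units.mul_inv, mul_one]
  rw [h3, smul_smul, inv_mul_cancel₀ hc, one_smul]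

theorem Permutes.unique {A : GL (Fin 2) (ZMod 5)} {s t : Equiv.Perm (Fin 4)}
    (hs : Permutes A s) (ht : Permutes A t) : s = t := by
  ext1 i
  obtain ⟨c, hc, h1⟩ := hs i
  obtain ⟨d, hd, h2⟩ := ht i
  refine lineMat_inj _ _ c d hc ?_
  have h := h1.symm.trans h2
  rw [← smul_mul_assoc, ← smul_mul_assoc] at h
  exact A.isUnit.mul_right_cancel h

theorem Permutes.of_scalar {A : GL (Fin 2) (ZMod 5)} (h : A ∈ scalarSubgroup) :
    Permutes A 1 := by
  obtain ⟨u, rfl⟩ := h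
  intro i
  refine ⟨1, by decide, ?_⟩
  rw [one_smul]
  exact (Matrix.scalar_commute (u : ZMod 5) (fun r' => Commute.all _ _) (lineMat i)).eq

theorem Permutes.scalar {A : GL (Fin 2) (ZMod 5)} (h : Permutes A 1) :
    A ∈ scalarSubgroup := by
  haveI := fact_prime_five
  have e := Matrix.eta_fin_two A.1
  have h' := fix_scalar (A.1 0 0) (A.1 0 1) (A.1 1 0) (A.1 1 1) (by rw [← e]; exact h)
  obtain ⟨hb, hc, hd⟩ := h'
  have hdet : A.1 0 0 ≠ 0 := by
    intro h0
    have hu := (Matrix.isUnit_iff_isUnit_det A.1).1 A.isUnit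
    rw [Matrix.det_fin_two, hb, h0] at hu
    simp at hu
  refine ⟨Units.mk0 _ hdet, ?_⟩
  apply Units.ext
  refine Eq.trans ?_ e.symm
  rw [hb, hc, ← hd]
  ext i j
  fin_cases i <;> fin_cases j <;> simp

/-- The permutation induced by `[[0,3],[3,4]]`. -/
def permA : Equiv.Perm (Fin 4) := ⟨![3, 1, 0, 2], ![2, 1, 3, 0], by decide, by decide⟩

/-- The permutation induced by `[[3,0],[4,4]]`. -/
def permB : Equiv.Perm (Fin 4) := ⟨![3, 0, 1, 2], ![1, 2, 3, 0], by decide, by decide⟩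

theorem perm_words : ∀ s : Equiv.Perm (Fin 4), ∃ i j k l : Fin 4,
    s = permB ^ i.1 * permA ^ j.1 * permB ^ k.1 * permA ^ l.1 := by
  decide +kernel

theorem permutes_A {A : GL (Fin 2) (ZMod 5)} (h : A.1 = !![0, 3; 3, 4]) :
    Permutes A permA := by
  unfold Permutes; rw [h]; decide +kernel

theorem permutes_B {A : GL (Fin 2) (ZMod 5)} (h : A.1 = !![3, 0; 4, 4]) :
    Permutes A permB := by
  unfold Permutes; rw [h]; decide +kernel

theorem permutes_C {A : GL (Fin 2) (ZMod 5)} (h : A.1 = !![2, 0; 0, 2]) :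
    Permutes A 1 := by
  unfold Permutes; rw [h]; decide +kernel

/-- The image in `PGL₂(F₅)` (the quotient of `GL₂(F₅)` by the scalar
matrices) of the subgroup generated by `[[0,3],[3,4]]`, `[[2,0],[0,2]]` and
`[[3,0],[4,4]]` is isomorphic to the symmetric group `S₄`. -/
theorem stmt15 (G : Subgroup (GL (Fin 2) (ZMod 5)))
    (hG : G = Subgroup.closure {h : GL (Fin 2) (ZMod 5) |
      (h : Matrix (Fin 2) (Fin 2) (ZMod 5)) = !![0, 3; 3, 4] ∨
      (h : Matrix (Fin 2) (Fin 2) (ZMod 5)) = !![2, 0; 0, 2] ∨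
      (h : Matrix (Fin 2) (Fin 2) (ZMod 5)) = !![3, 0; 4, 4]}) :
    Nonempty ((Subgroup.map (QuotientGroup.mk' scalarSubgroup) G) ≃*
      Equiv.Perm (Fin 4)) := by
  have hex : ∀ A : G, ∃ s, Permutes A.1 s := by
    suffices hs : ∀ A ∈ G, ∃ s, Permutes A s from fun A => hs A.1 A.2
    intro A hA
    rw [hG] at hA
    induction hA using Subgroup.closure_induction with
    | mem x hx =>
      rcases hx with h | h | h
      · exact ⟨_, permutes_A h⟩
      · exact ⟨_, permutes_C h⟩
      · exact ⟨_, permutes_B h⟩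
    | one => exact ⟨1, Permutes.one⟩
    | mul x y _ _ hx hy =>
      obtain ⟨s, hs⟩ := hx
      obtain ⟨t, ht⟩ := hy
      exact ⟨_, hs.mul ht⟩
    | inv x _ hx =>
      obtain ⟨s, hs⟩ := hx
      exact ⟨_, hs.inv⟩
  choose f hf using hex
  let φ : G →* Equiv.Perm (Fin 4) :=
    MonoidHom.mk' f fun A B => (hf (A * B)).unique ((hf A).mul (hf B))
  have hφ : ∀ A : G, Permutes A.1 (φ A) := hf
  have hφs : Function.Surjective φ := by
    let A : GL (Fin 2) (ZMod 5) :=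
      ⟨!![0, 3; 3, 4], !![4, 2; 2, 0], by decide +kernel, by decide +kernel⟩
    let B : GL (Fin 2) (ZMod 5) :=
      ⟨!![3, 0; 4, 4], !![2, 0; 3, 4], by decide +kernel, by decide +kernel⟩
    have hA : A ∈ G := by rw [hG]; exact Subgroup.subset_closure (Or.inl rfl)
    have hB : B ∈ G := by rw [hG]; exact Subgroup.subset_closure (Or.inr (Or.inr rfl))
    have h1 : φ ⟨A, hA⟩ = permA := (hφ ⟨A, hA⟩).unique (permutes_A rfl)
    have h2 : φ ⟨B, hB⟩ = permB := (hφ ⟨B, hB⟩).unique (permutes_B rfl)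
    intro s
    obtain ⟨i, j, k, l, rfl⟩ := perm_words s
    exact ⟨⟨B, hB⟩ ^ i.1 * ⟨A, hA⟩ ^ j.1 * ⟨B, hB⟩ ^ k.1 * ⟨A, hA⟩ ^ l.1, by
      rw [map_mul, map_mul, map_mul, map_pow, map_pow, map_pow, map_pow, h1, h2]⟩
  let ψ := (QuotientGroup.mk' scalarSubgroup).subgroupMap G
  have hψs : Function.Surjective ψ := MonoidHom.subgroupMap_surjective _ _
  have hker : ψ.ker = φ.ker := by
    ext A
    have h1 : A ∈ ψ.ker ↔ A.1 ∈ scalarSubgroup := by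
      rw [MonoidHom.mem_ker, Subtype.ext_iff]
      exact QuotientGroup.eq_one_iff A.1
    rw [h1, MonoidHom.mem_ker]
    constructor
    · intro h
      exact (hφ A).unique (Permutes.of_scalar h)
    · intro h
      have := hφ A
      rw [h] at this
      exact this.scalar
  exact ⟨(QuotientGroup.quotientKerEquivOfSurjective ψ hψs).symm.trans
    ((QuotientGroup.quotientMulEquivOfEq hker).trans
      (QuotientGroup.quotientKerEquivOfSurjective φ hφs))⟩
end
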